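/- For any CGP C and any data graph G with C ≺_c G, there exists a unique maximum conditional-simulation match relation S^G_C of C in G: S^G_C is a conditional-simulation relation satisfying conditions (1)–(6), and every conditional-simulation relation of C in G is contained in S^G_C. -/

import Mathlib

/-! Formalization of graph patterns from "Revisited Containment for Graph Patterns".
Labels are modeled as natural numbers, attribute names as naturals, attribute
values as integers. -/

/-- Comparison operators allowed in atomic attribute constraints. -/
inductive AOp : Type
  | ge | le | eq | ne
deriving DecidableEq

/-- `AOp.holds op c' c` : the value `c'` satisfies the constraint `_ op c`. -/
def AOp.holds : AOp → ℤ → ℤ → Prop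
  | .ge, c', c => c' ≥ c
  | .le, c', c => c' ≤ c
  | .eq, c', c => c' = c
  | .ne, c', c => c' ≠ c

/-- A finite conjunction of atomic constraints `A op c`. -/
abbrev AttrConstraints := Finset (ℕ × AOp × ℤ)

/-- `A(v) ∼ A_P(u)` : the attribute values of a data node (a partial map from
attribute names to values) match the attribute constraints of a pattern node. -/
def attrMatch (a : ℕ → Option ℤ) (P : AttrConstraints) : Prop :=
  ∀ c ∈ P, ∃ c', a c.1 = some c' ∧ c.2.1.holds c' c.2.2

/-- `A_1(u_1) ∼ A_2(u_2)` : the constraints over each attribute in `P2` are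
entailed by those over the same attribute in `P1`. -/
def constrEntails (P1 P2 : AttrConstraints) : Prop :=
  ∀ c2 ∈ P2, ∀ x : ℤ,
    (∀ c1 ∈ P1, c1.1 = c2.1 → c1.2.1.holds x c1.2.2) → c2.2.1.holds x c2.2.2

/-- A data graph: finite node set, directed edges, labels on nodes and edges,
and a partial attribute-value map on nodes. -/
structure DataGraph (V : Type) where
  nodes : Finset V
  edges : Finset (V × V)
  nlabel : V → ℕ
  elabel : V × V → ℕ
  attr : V → ℕ → Option ℤ

/-- Well-formedness of a data graph: edges connect nodes. -/
def DataGraph.WellFormed {V : Type} (G : DataGraph V) : Prop :=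
  ∀ e ∈ G.edges, e.1 ∈ G.nodes ∧ e.2 ∈ G.nodes

/-- `Gs` is a subgraph of `G`. -/
def IsSubgraph {V : Type} (Gs G : DataGraph V) : Prop :=
  Gs.WellFormed ∧ Gs.nodes ⊆ G.nodes ∧ Gs.edges ⊆ G.edges ∧
  (∀ v ∈ Gs.nodes, Gs.nlabel v = G.nlabel v ∧ Gs.attr v = G.attr v) ∧
  (∀ e ∈ Gs.edges, Gs.elabel e = G.elabel e)

/-- A quantified graph pattern (QGP): nodes, edges, labels, attribute
constraints on nodes and counting quantifiers on edges. -/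
structure QGP (V : Type) where
  nodes : Finset V
  edges : Finset (V × V)
  nlabel : V → ℕ
  elabel : V × V → ℕ
  attrC : V → AttrConstraints
  cq : V × V → ℕ

/-- Undirected adjacency in a pattern. -/
def QGP.Adj {V : Type} (Q : QGP V) (u w : V) : Prop :=
  (u, w) ∈ Q.edges ∨ (w, u) ∈ Q.edges

/-- Well-formedness of a QGP: edges connect nodes, counting quantifiers are
at least 1, and the pattern is connected. -/
def QGP.WellFormed {V : Type} (Q : QGP V) : Prop :=
  (∀ e ∈ Q.edges, e.1 ∈ Q.nodes ∧ e.2 ∈ Q.nodes) ∧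
  (∀ e ∈ Q.edges, 1 ≤ Q.cq e) ∧
  (∀ u ∈ Q.nodes, ∀ w ∈ Q.nodes, Relation.ReflTransGen Q.Adj u w)

/-- A POM (pattern-only matching) match relation of `Q1` in `Q2`:
conditions (1)–(3) of Definition of pattern-only matching. -/
def IsPOMRel {V1 V2 : Type} (Q1 : QGP V1) (Q2 : QGP V2) (S : Set (V1 × V2)) : Prop :=
  (∀ p ∈ S, p.1 ∈ Q1.nodes ∧ p.2 ∈ Q2.nodes) ∧
  (∀ p ∈ S, Q1.nlabel p.1 = Q2.nlabel p.2 ∧ constrEntails (Q1.attrC p.1) (Q2.attrC p.2)) ∧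
  (∀ p ∈ S, ∀ w2, (w2, p.2) ∈ Q2.edges →
      ∃ w1, (w1, p.1) ∈ Q1.edges ∧ (w1, w2) ∈ S ∧
        Q1.elabel (w1, p.1) = Q2.elabel (w2, p.2)) ∧
  (∀ p ∈ S, ∀ w2, (p.2, w2) ∈ Q2.edges →
      ∃ w1, (p.1, w1) ∈ Q1.edges ∧ (w1, w2) ∈ S ∧
        Q1.elabel (p.1, w1) = Q2.elabel (p.2, w2) ∧
        Q2.cq (p.2, w2) ≤ Q1.cq (p.1, w1))

/-- `Q1 ▷ Q2` : `Q1` matches `Q2` (pattern-only matching). -/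
def POM {V1 V2 : Type} (Q1 : QGP V1) (Q2 : QGP V2) : Prop :=
  ∃ S : Set (V1 × V2), IsPOMRel Q1 Q2 S ∧ ∀ u2 ∈ Q2.nodes, ∃ u1, (u1, u2) ∈ S

/-- A conditional-simulation relation of a QGP `Q` in a data graph `G`
(conditions (1)–(3) of conditional simulation). -/
def IsSimRel {VP VD : Type} (Q : QGP VP) (G : DataGraph VD) (S : Set (VP × VD)) : Prop :=
  (∀ p ∈ S, p.1 ∈ Q.nodes ∧ p.2 ∈ G.nodes) ∧
  (∀ p ∈ S, Q.nlabel p.1 = G.nlabel p.2 ∧ attrMatch (G.attr p.2) (Q.attrC p.1)) ∧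
  (∀ p ∈ S, ∀ u', (p.1, u') ∈ Q.edges →
      ∃ T : Finset VD, Q.cq (p.1, u') ≤ T.card ∧
        ∀ v' ∈ T, (p.2, v') ∈ G.edges ∧
          G.elabel (p.2, v') = Q.elabel (p.1, u') ∧ (u', v') ∈ S) ∧
  (∀ p ∈ S, ∀ u', (u', p.1) ∈ Q.edges →
      ∃ v', (v', p.2) ∈ G.edges ∧
        G.elabel (v', p.2) = Q.elabel (u', p.1) ∧ (u', v') ∈ S)

/-- `Q ≺_c G` via the relation `S` (conditions (1)–(4)). -/
def QGP.MatchesVia {VP VD : Type} (Q : QGP VP) (G : DataGraph VD)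
    (S : Set (VP × VD)) : Prop :=
  IsSimRel Q G S ∧ ∀ u ∈ Q.nodes, ∃ v, (u, v) ∈ S

/-- `Q ≺_c G` : the data graph `G` matches the QGP `Q` via conditional simulation. -/
def QGP.Matches {VP VD : Type} (Q : QGP VP) (G : DataGraph VD) : Prop :=
  ∃ S : Set (VP × VD), Q.MatchesVia G S

/-- The maximum conditional-simulation relation `S^G_Q` of a QGP in a data graph. -/
def QGP.maxRel {VP VD : Type} (Q : QGP VP) (G : DataGraph VD) : Set (VP × VD) :=
  ⋃₀ {S | IsSimRel Q G S}

/-- The match result `M^G_Q` on pattern nodes (∅ when `Q ⊀_c G`). -/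
def QGP.MN {VP VD : Type} (Q : QGP VP) (G : DataGraph VD) (u : VP) : Set VD :=
  {v | Q.Matches G ∧ (u, v) ∈ Q.maxRel G}

/-- The match result `M^G_Q` on pattern edges (∅ when `Q ⊀_c G`). -/
def QGP.ME {VP VD : Type} (Q : QGP VP) (G : DataGraph VD) (e : VP × VP) : Set (VD × VD) :=
  {d | Q.Matches G ∧ d ∈ G.edges ∧ (e.1, d.1) ∈ Q.maxRel G ∧
      (e.2, d.2) ∈ Q.maxRel G ∧ G.elabel d = Q.elabel e}

/-- A data node `v` satisfies a predicate (a QGP with query focus `u`) in `G`: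
there is a subgraph of `G` matching the predicate via a relation containing `(u,v)`. -/
def SatPred {VP VD : Type} (Q : QGP VP) (G : DataGraph VD) (u : VP) (v : VD) : Prop :=
  ∃ (Gs : DataGraph VD) (S : Set (VP × VD)),
    IsSubgraph Gs G ∧ Q.MatchesVia Gs S ∧ (u, v) ∈ S

/-- The shape (nodes, edges, query focus) of a predicate of a CGP. -/
structure PredShape (V : Type) where
  nodes : Finset V
  edges : Finset (V × V)
  focus : V

/-- A conditional graph pattern (CGP): global labelling/attribute/quantifier
data, a core, and finite sets of positive and negative predicates, each with
its query focus. -/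
structure CGP (V : Type) where
  nlabel : V → ℕ
  elabel : V × V → ℕ
  attrC : V → AttrConstraints
  cq : V × V → ℕ
  coreNodes : Finset V
  coreEdges : Finset (V × V)
  pos : Finset (PredShape V)
  neg : Finset (PredShape V)

/-- The core of a CGP, as a QGP. -/
def CGP.coreQGP {V : Type} (C : CGP V) : QGP V :=
  ⟨C.coreNodes, C.coreEdges, C.nlabel, C.elabel, C.attrC, C.cq⟩

/-- A predicate of a CGP, as a QGP. -/
def CGP.predQGP {V : Type} (C : CGP V) (q : PredShape V) : QGP V :=
  ⟨q.nodes, q.edges, C.nlabel, C.elabel, C.attrC, C.cq⟩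

/-- The set `E⁺` of edges of positive predicates. -/
def CGP.posEdges {V : Type} [DecidableEq V] (C : CGP V) : Finset (V × V) :=
  C.pos.biUnion (·.edges)

/-- The set `E⁻` of edges of negative predicates. -/
def CGP.negEdges {V : Type} [DecidableEq V] (C : CGP V) : Finset (V × V) :=
  C.neg.biUnion (·.edges)

/-- The positive version `C⁺` of a CGP: the QGP with nodes `V ∪ V⁺`
and edges `E ∪ E⁺`. -/
def CGP.posVersion {V : Type} [DecidableEq V] (C : CGP V) : QGP V :=
  ⟨C.coreNodes ∪ C.pos.biUnion (·.nodes), C.coreEdges ∪ C.posEdges,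
   C.nlabel, C.elabel, C.attrC, C.cq⟩

/-- Well-formedness of a CGP: the core and each predicate are well-formed QGPs,
each predicate's query focus is a core node, and each predicate shares with the
core exactly its focus node. -/
def CGP.WellFormed {V : Type} [DecidableEq V] (C : CGP V) : Prop :=
  C.coreQGP.WellFormed ∧
  (∀ q ∈ C.pos, (C.predQGP q).WellFormed ∧ q.focus ∈ C.coreNodes ∧
    q.focus ∈ q.nodes ∧ q.nodes ∩ C.coreNodes = {q.focus}) ∧
  (∀ q ∈ C.neg, (C.predQGP q).WellFormed ∧ q.focus ∈ C.coreNodes ∧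
    q.focus ∈ q.nodes ∧ q.nodes ∩ C.coreNodes = {q.focus})

/-- A conditional-simulation relation of a CGP `C` in a data graph `G`:
conditions (1)–(3) on the core plus conditions (4)–(5) on predicates. -/
def IsCondSimRel {V D : Type} (C : CGP V) (G : DataGraph D) (S : Set (V × D)) : Prop :=
  IsSimRel C.coreQGP G S ∧
  (∀ p ∈ S, ∀ q ∈ C.pos, q.focus = p.1 → SatPred (C.predQGP q) G p.1 p.2) ∧
  (∀ p ∈ S, ∀ q ∈ C.neg, q.focus = p.1 → ¬ SatPred (C.predQGP q) G p.1 p.2)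

/-- `C ≺_c G` : the data graph `G` matches the CGP `C` via conditional simulation. -/
def CGP.Matches {V D : Type} (C : CGP V) (G : DataGraph D) : Prop :=
  ∃ S : Set (V × D), IsCondSimRel C G S ∧ ∀ u ∈ C.coreNodes, ∃ v, (u, v) ∈ S

/-- The maximum conditional-simulation relation `S^G_C` of a CGP in a data graph. -/
def CGP.maxRel {V D : Type} (C : CGP V) (G : DataGraph D) : Set (V × D) :=
  ⋃₀ {S | IsCondSimRel C G S}

/-- The match result `M^G_C` on core nodes (∅ when `C ⊀_c G`). -/
def CGP.MN {V D : Type} (C : CGP V) (G : DataGraph D) (u : V) : Set D :=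
  {v | C.Matches G ∧ (u, v) ∈ C.maxRel G}

/-- The match result `M^G_C` on core edges (∅ when `C ⊀_c G`). -/
def CGP.ME {V D : Type} (C : CGP V) (G : DataGraph D) (e : V × V) : Set (D × D) :=
  {d | C.Matches G ∧ d ∈ G.edges ∧ (e.1, d.1) ∈ C.maxRel G ∧
      (e.2, d.2) ∈ C.maxRel G ∧ G.elabel d = C.elabel e}

/-- Traditional containment `C1 ⊑ C2` via the mapping `λ` (given by `lamN` on
core nodes, `lamE` on core edges): over every data graph, every match of a core
node (edge) of `C1` is a match of some node (edge) in its image under `λ`. -/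
def TradContainedVia {V1 V2 : Type} (C1 : CGP V1) (C2 : CGP V2)
    (lamN : V1 → Set V2) (lamE : V1 × V1 → Set (V2 × V2)) : Prop :=
  (∀ u ∈ C1.coreNodes, lamN u ⊆ ↑C2.coreNodes) ∧
  (∀ e ∈ C1.coreEdges, lamE e ⊆ ↑C2.coreEdges) ∧
  ∀ (D : Type) (G : DataGraph D), G.WellFormed →
    (∀ u ∈ C1.coreNodes, C1.MN G u ⊆ ⋃ u' ∈ lamN u, C2.MN G u') ∧
    (∀ e ∈ C1.coreEdges, C1.ME G e ⊆ ⋃ e' ∈ lamE e, C2.ME G e')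

/-- Conditions (★) on a relation `S` between `C1⁺` and `C2⁺`. -/
def StarCond {V1 V2 : Type} [DecidableEq V1] [DecidableEq V2]
    (C1 : CGP V1) (C2 : CGP V2) (S : Set (V1 × V2)) : Prop :=
  -- (1) S is a POM match relation witnessing C1⁺ ▷ C2⁺
  IsPOMRel C1.posVersion C2.posVersion S ∧
  (∀ u2 ∈ C2.posVersion.nodes, ∃ u1, (u1, u2) ∈ S) ∧
  -- (2) negative predicates of C2 are matched by negative predicates of C1
  (∀ p ∈ S, ∀ q2 ∈ C2.neg, q2.focus = p.2 →
      ∃ q1 ∈ C1.neg, q1.focus = p.1 ∧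
        ∃ S' : Set (V2 × V1), IsPOMRel (C2.predQGP q2) (C1.predQGP q1) S' ∧
          (∀ w1 ∈ q1.nodes, ∃ w2, (w2, w1) ∈ S') ∧ (p.2, p.1) ∈ S') ∧
  -- (3) core nodes and core edges of C1 are matched to core nodes/edges of C2
  (∀ u1 ∈ C1.coreNodes, ∃ u2 ∈ C2.coreNodes, (u1, u2) ∈ S) ∧
  (∀ e1 ∈ C1.coreEdges, ∃ e2 ∈ C2.coreEdges, (e1.1, e2.1) ∈ S ∧ (e1.2, e2.2) ∈ S)

/-- The mapping `λ` on core nodes induced by a match relation `S`. -/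
def inducedLamN {V1 V2 : Type} (C2 : CGP V2) (S : Set (V1 × V2)) (u : V1) : Set V2 :=
  {u2 | u2 ∈ C2.coreNodes ∧ (u, u2) ∈ S}

/-- The mapping `λ` on core edges induced by a match relation `S`. -/
def inducedLamE {V1 V2 : Type} (C2 : CGP V2) (S : Set (V1 × V2))
    (e : V1 × V1) : Set (V2 × V2) :=
  {e2 | e2 ∈ C2.coreEdges ∧ (e.1, e2.1) ∈ S ∧ (e.2, e2.2) ∈ S}

/-- The data nodes occurring in the match result of `C` over `G`. -/
def NodesInResult {V D : Type} (C : CGP V) (G : DataGraph D) : Set D :=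
  ⋃ u ∈ C.coreNodes, C.MN G u

/-- Two data graphs have the same match result for `C`. -/
def MatchResultsAgree {V D : Type} (C : CGP V) (G G' : DataGraph D) : Prop :=
  (∀ u ∈ C.coreNodes, C.MN G u = C.MN G' u) ∧
  (∀ e ∈ C.coreEdges, C.ME G e = C.ME G' e)

/-- `G` and `G'` are data graphs over the same node set that agree on the labels
and attribute values of all nodes occurring in their match results of `C2`, and
have the same match result of `C2`. -/
def GraphsAgreeFor {V2 D : Type} (C2 : CGP V2) (G G' : DataGraph D) : Prop :=
  G.nodes = G'.nodes ∧
  (∀ v ∈ NodesInResult C2 G ∪ NodesInResult C2 G',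
      G.nlabel v = G'.nlabel v ∧ G.attr v = G'.attr v) ∧
  MatchResultsAgree C2 G G'

/-- A predicate `q` of `C1` (with query focus `q.focus`) is evaluable over a set
`lam` of core nodes of `C2`: for every data graph and every node in the
intersection of the match sets of `lam`, satisfaction of the predicate is
determined by the match result of `C2` (together with labels and attribute
values of the nodes occurring in it). -/
def Evaluable {V1 V2 : Type} (C1 : CGP V1) (C2 : CGP V2)
    (lam : Set V2) (q : PredShape V1) : Prop :=
  ∀ (D : Type) (G G' : DataGraph D), G.WellFormed → G'.WellFormed →
    GraphsAgreeFor C2 G G' →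
    ∀ v, v ∈ ⋂ u' ∈ lam, C2.MN G u' →
      (SatPred (C1.predQGP q) G q.focus v ↔ SatPred (C1.predQGP q) G' q.focus v)

/-- `r` is (a part of) a positive predicate of `C`, with the same query focus. -/
def IsPartOfPos {V : Type} (C : CGP V) (r : PredShape V) : Prop :=
  ∃ q ∈ C.pos, r.nodes ⊆ q.nodes ∧ r.edges ⊆ q.edges ∧ r.focus = q.focus

/-- A containment match relation between two QGPs: a POM match relation
witnessing `Q1 ▷ Q2` in which moreover every node and edge of `Q1` is matched
to some node/edge of `Q2`. -/
def QGPContainRel {V1 V2 : Type} (Q1 : QGP V1) (Q2 : QGP V2)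
    (S : Set (V1 × V2)) : Prop :=
  IsPOMRel Q1 Q2 S ∧ (∀ u2 ∈ Q2.nodes, ∃ u1, (u1, u2) ∈ S) ∧
  (∀ u1 ∈ Q1.nodes, ∃ u2 ∈ Q2.nodes, (u1, u2) ∈ S) ∧
  (∀ e1 ∈ Q1.edges, ∃ e2 ∈ Q2.edges, (e1.1, e2.1) ∈ S ∧ (e1.2, e2.2) ∈ S)

/-- Remove the attribute constraints on the query focus `u`. -/
def QGP.removeFocusAttr {V : Type} [DecidableEq V] (Q : QGP V) (u : V) : QGP V :=
  { Q with attrC := fun w => if w = u then (∅ : AttrConstraints) else Q.attrC w }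

/-- `Q1(u1) ≡ Q2(u2)` : equivalence of QGPs with query foci — mutual containment
(after dropping the attribute constraints on the foci) via maximum match
relations that relate the two foci. -/
def FocusEquiv {V1 V2 : Type} [DecidableEq V1] [DecidableEq V2]
    (Q1 : QGP V1) (u1 : V1) (Q2 : QGP V2) (u2 : V2) : Prop :=
  ∃ (S12 : Set (V1 × V2)) (S21 : Set (V2 × V1)),
    QGPContainRel (Q1.removeFocusAttr u1) (Q2.removeFocusAttr u2) S12 ∧
    (∀ S, QGPContainRel (Q1.removeFocusAttr u1) (Q2.removeFocusAttr u2) S → S ⊆ S12) ∧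
    QGPContainRel (Q2.removeFocusAttr u2) (Q1.removeFocusAttr u1) S21 ∧
    (∀ S, QGPContainRel (Q2.removeFocusAttr u2) (Q1.removeFocusAttr u1) S → S ⊆ S21) ∧
    (u1, u2) ∈ S12 ∧ (u2, u1) ∈ S21

/-- The refinement relation `R⁺` for positive predicates determined by `S`. -/
def Rplus {V1 V2 : Type} [DecidableEq V1] (C1 : CGP V1) (C2 : CGP V2)
    (S : Set (V1 × V2)) : Set ((V1 × V1) × (V2 × V2)) :=
  {p | p.1 ∈ C1.posEdges ∧ p.2 ∈ C2.coreEdges ∧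
       (p.1.1, p.2.1) ∈ S ∧ (p.1.2, p.2.2) ∈ S}

/-- The elimination relation `E⁺` for positive predicates determined by `S`. -/
def Eplus {V1 V2 : Type} [DecidableEq V1] [DecidableEq V2]
    (C1 : CGP V1) (C2 : CGP V2) (S : Set (V1 × V2)) :
    Set (PredShape V1 × V2) :=
  {p | IsPartOfPos C1 p.1 ∧ (p.1.focus, p.2) ∈ S ∧ p.2 ∈ C2.coreNodes ∧
       (∃ r2 : PredShape V2, IsPartOfPos C2 r2 ∧ r2.focus = p.2 ∧
          FocusEquiv (C1.predQGP p.1) p.1.focus (C2.predQGP r2) r2.focus) ∧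
       (∀ e ∈ C1.posEdges, e ∉ p.1.edges →
          (e.1 ∈ p.1.nodes → e.1 = p.1.focus) ∧
          (e.2 ∈ p.1.nodes → e.2 = p.1.focus))}

/-- `u1 ∼ u2` for pattern nodes of two CGPs: equal labels and entailed
attribute constraints. -/
def NodeSimC {V1 V2 : Type} (C1 : CGP V1) (C2 : CGP V2) (u1 : V1) (u2 : V2) : Prop :=
  C1.nlabel u1 = C2.nlabel u2 ∧ constrEntails (C1.attrC u1) (C2.attrC u2)

/-- `e ∼ e'` for pattern edges of two CGPs: matching endpoints, equal edge
labels, and counting quantifier of `e` at least that of `e'`. -/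
def EdgeSimC {V1 V2 : Type} (C1 : CGP V1) (C2 : CGP V2)
    (e : V1 × V1) (e' : V2 × V2) : Prop :=
  NodeSimC C1 C2 e.1 e'.1 ∧ NodeSimC C1 C2 e.2 e'.2 ∧
  C1.elabel e = C2.elabel e' ∧ C2.cq e' ≤ C1.cq e

/-- Two directed edges intersect in some node (for undirected paths). -/
def EdgesTouch {V : Type} (e f : V × V) : Prop :=
  e.1 = f.1 ∨ e.1 = f.2 ∨ e.2 = f.1 ∨ e.2 = f.2

/-- An undirected path among the edges `E`, starting at the node `u`. -/
def IsUPath {V : Type} (E : Set (V × V)) (u : V) (l : List (V × V)) : Prop :=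
  (∀ e ∈ l, e ∈ E) ∧ List.Chain' EdgesTouch l ∧
  (∀ e, l.head? = some e → (e.1 = u ∨ e.2 = u))

/-- The refinement relation `R⁻` for negative predicates determined by `S`:
`(e, e')` with `e` an edge of a negative predicate of `C1`, `e'` a core edge of
`C2`, `e ∼ e'`, and undirected paths from a pair `(u,w) ∈ S` leading to `e`
resp. `e'` whose corresponding edges are already in `R⁻`. -/
inductive InRminus {V1 V2 : Type} (C1 : CGP V1) (C2 : CGP V2)
    (S : Set (V1 × V2)) : (V1 × V1) → (V2 × V2) → Prop where
  | intro (e : V1 × V1) (e' : V2 × V2) (q : PredShape V1)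
      (hq : q ∈ C1.neg) (he : e ∈ q.edges) (he' : e' ∈ C2.coreEdges)
      (hsim : EdgeSimC C1 C2 e e')
      (u : V1) (w : V2) (huw : (u, w) ∈ S)
      (l1 : List (V1 × V1)) (l2 : List (V2 × V2)) (hlen : l1.length = l2.length)
      (hp1 : IsUPath (fun x => x ∈ q.edges) u (l1 ++ [e]))
      (hp2 : IsUPath (fun x => x ∈ C2.coreEdges) w (l2 ++ [e']))
      (hrec : ∀ i : Fin l1.length,
        InRminus C1 C2 S (l1.get i) (l2.get (Fin.cast hlen i))) :
      InRminus C1 C2 S e e'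

/-- The elimination relation `E⁻` for negative predicates determined by `S`. -/
def Eminus {V1 V2 : Type} [DecidableEq V1] [DecidableEq V2]
    (C1 : CGP V1) (C2 : CGP V2) (S : Set (V1 × V2)) :
    Set (PredShape V1 × V2) :=
  {p | p.1 ∈ C1.neg ∧ (p.1.focus, p.2) ∈ S ∧
       ∃ q2 ∈ C2.neg, q2.focus = p.2 ∧
         FocusEquiv (C1.predQGP p.1) p.1.focus (C2.predQGP q2) q2.focus}

/-! Conditions (1)–(5) constrain the pairs of `S` one at a time, and they refer to the rest of `S`
only by demanding the existence of further pairs in it. A witness inside one relation is therefore a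
witness inside any larger one, so these conditions survive arbitrary unions, and the union of all
conditional-simulation relations is the greatest one. -/

section MaximumRelation

variable {V D : Type} {Q : QGP V} {C : CGP V} {G : DataGraph D} {𝒮 : Set (Set (V × D))}

theorem IsSimRel.sUnion (h𝒮 : ∀ S ∈ 𝒮, IsSimRel Q G S) : IsSimRel Q G (⋃₀ 𝒮) := by
  refine ⟨?nodes, ?labels, ?successors, ?predecessors⟩
  case nodes =>
    rintro p ⟨S, hS, hp⟩
    exact (h𝒮 S hS).1 p hp
  case labels =>
    rintro p ⟨S, hS, hp⟩
    exact (h𝒮 S hS).2.1 p hp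
  case successors =>
    rintro p ⟨S, hS, hp⟩ u' hu'
    obtain ⟨T, hcard, hT⟩ := (h𝒮 S hS).2.2.1 p hp u' hu'
    refine ⟨T, hcard, fun v' hv' => ?_⟩
    obtain ⟨hedge, hlabel, hmem⟩ := hT v' hv'
    exact ⟨hedge, hlabel, Set.mem_sUnion_of_mem hmem hS⟩
  case predecessors =>
    rintro p ⟨S, hS, hp⟩ u' hu'
    obtain ⟨v', hedge, hlabel, hmem⟩ := (h𝒮 S hS).2.2.2 p hp u' hu'
    exact ⟨v', hedge, hlabel, Set.mem_sUnion_of_mem hmem hS⟩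

theorem IsCondSimRel.sUnion (h𝒮 : ∀ S ∈ 𝒮, IsCondSimRel C G S) : IsCondSimRel C G (⋃₀ 𝒮) := by
  refine ⟨IsSimRel.sUnion fun S hS => (h𝒮 S hS).1, ?positive, ?negative⟩
  case positive =>
    rintro p ⟨S, hS, hp⟩
    exact (h𝒮 S hS).2.1 p hp
  case negative =>
    rintro p ⟨S, hS, hp⟩
    exact (h𝒮 S hS).2.2 p hp

theorem CGP.isGreatest_maxRel (C : CGP V) (G : DataGraph D) :
    IsGreatest {S | IsCondSimRel C G S} (C.maxRel G) :=
  ⟨IsCondSimRel.sUnion fun _ hS => hS, fun _ hS => Set.subset_sUnion_of_mem hS⟩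

theorem CGP.Matches.exists_mem_maxRel (h : C.Matches G) {u : V} (hu : u ∈ C.coreNodes) :
    ∃ v, (u, v) ∈ C.maxRel G := by
  obtain ⟨S, hS, hcover⟩ := h
  exact (hcover u hu).imp fun _ hv => (C.isGreatest_maxRel G).2 hS hv

end MaximumRelation

/-- If `C ≺_c G`, there exists a unique maximum
conditional-simulation match relation `S^G_C` of `C` in `G`: it satisfies
conditions (1)–(6) and contains every conditional-simulation relation of `C`
in `G`. -/
theorem cond_sim_unique_max {V D : Type} [DecidableEq V]
    (C : CGP V) (hC : C.WellFormed)
    (G : DataGraph D) (hG : G.WellFormed)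
    (h : C.Matches G) :
    ∃! S : Set (V × D),
      IsCondSimRel C G S ∧ (∀ u ∈ C.coreNodes, ∃ v, (u, v) ∈ S) ∧
      ∀ S' : Set (V × D), IsCondSimRel C G S' → S' ⊆ S := by
  have hmax : IsGreatest {S | IsCondSimRel C G S} (C.maxRel G) := C.isGreatest_maxRel G
  refine ⟨C.maxRel G, ⟨hmax.1, fun _ hu => h.exists_mem_maxRel hu, fun _ hS => hmax.2 hS⟩, ?_⟩
  rintro S ⟨hS, -, hS_max⟩
  exact IsGreatest.unique ⟨hS, hS_max⟩ hmax
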